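/- arXiv:2401.06451 — 4 statements merged into one kernel-verified Lean document; each statement's English description precedes it below -/
import Mathlib

section
/- If M is a Kripke model in the class KH and U = (E,ϑ,K^U) is a hope update model, then the product update M × U is again in the class KH; that is, each K_i^× is an equivalence relation and each H_i^× is shift-serial, contained in K_i^× (HinK), and satisfies oneH. -/
/-- A Kripke model (raw data): valuation, and knowledge and hope relations for `n` agents. -/
structure Model (n : ℕ) (W : Type) where
  val : ℕ → W → Prop
  K : Fin n → W → W → Prop
  H : Fin n → W → W → Prop

/-- Membership in the class KH: each `K i` is an equivalence relation, each `H i` is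
shift-serial, `H i ⊆ K i` (HinK), and oneH. -/
def Model.KH {n : ℕ} {W : Type} (M : Model n W) : Prop :=
  (∀ i, Equivalence (M.K i)) ∧
  (∀ i w v, M.H i w v → ∃ z, M.H i v z) ∧
  (∀ i w v, M.H i w v → M.K i w v) ∧
  (∀ i w v, (∃ x, M.H i w x) → (∃ x, M.H i v x) → M.K i w v → M.H i w v)

/-- Formulas of the language `L_KH^priv`: atoms, negation, conjunction, knowledge,
hope, and private hope updates `[U,e]φ`, where the pointed hope update model `(U,e)`
consists of a finite nonempty set of actions `Fin m`, a hope update function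
`ϑ : Fin m → Fin n → Form`, equivalence relations `K^U_i` on actions,
and a designated action `e : Fin m`. -/
inductive Form (n : ℕ) : Type where
  | atom : ℕ → Form n
  | neg : Form n → Form n
  | and : Form n → Form n → Form n
  | know : Fin n → Form n → Form n
  | hope : Fin n → Form n → Form n
  | upd : (m : ℕ) → (ϑ : Fin m → Fin n → Form n) →
      (KU : Fin n → Fin m → Fin m → Prop) → (∀ i, Equivalence (KU i)) →
      Fin m → Form n → Form n

/-- A hope update model, packaged: actions `Fin m`, hope update formulas `ϑ e i`,
and equivalence relations `KU i` on actions. -/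
structure UpdModel (n m : ℕ) where
  ϑ : Fin m → Fin n → Form n
  KU : Fin n → Fin m → Fin m → Prop
  equiv : ∀ i, Equivalence (KU i)

/-- The formula `[U,e]φ`. -/
def Form.updM {n m : ℕ} (U : UpdModel n m) (e : Fin m) (φ : Form n) : Form n :=
  .upd m U.ϑ U.KU U.equiv e φ

/-- The product update `M × U` (with the hope update formulas given semantically as
predicates `ϑc e i : W → Prop`). -/
def Model.prodRaw {n : ℕ} {W : Type} {m : ℕ} (M : Model n W)
    (ϑc : Fin m → Fin n → W → Prop) (KU : Fin n → Fin m → Fin m → Prop) :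
    Model n (W × Fin m) where
  val := fun p x => M.val p x.1
  K := fun i x y => M.K i x.1 y.1 ∧ KU i x.2 y.2
  H := fun i x y => (M.K i x.1 y.1 ∧ KU i x.2 y.2) ∧ ϑc x.2 i x.1 ∧ ϑc y.2 i y.1

/-- Truth at a world. -/
def sat {n : ℕ} : Form n → {W : Type} → Model n W → W → Prop
  | .atom p, _, M, w => M.val p w
  | .neg φ, _, M, w => ¬ sat φ M w
  | .and φ ψ, _, M, w => sat φ M w ∧ sat ψ M w
  | .know i φ, _, M, w => ∀ v, M.K i w v → sat φ M v
  | .hope i φ, _, M, w => ∀ v, M.H i w v → sat φ M v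
  | .upd _ ϑ KU _ e ψ, _, M, w =>
      sat ψ (M.prodRaw (fun f i v => sat (ϑ f i) M v) KU) (w, e)

/-- The product update `M × U`. -/
def Model.prodU {n : ℕ} {W : Type} {m : ℕ} (M : Model n W) (U : UpdModel n m) :
    Model n (W × Fin m) :=
  M.prodRaw (fun f i v => sat (U.ϑ f i) M v) U.KU

def ftop {n : ℕ} : Form n := .neg (.and (.atom 0) (.neg (.atom 0)))
def fbot {n : ℕ} : Form n := .neg ftop
def fimpl {n : ℕ} (φ ψ : Form n) : Form n := .neg (.and φ (.neg ψ))
def forr {n : ℕ} (φ ψ : Form n) : Form n := .neg (.and (.neg φ) (.neg ψ))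
def fiff {n : ℕ} (φ ψ : Form n) : Form n := .and (fimpl φ ψ) (fimpl ψ φ)
def fcorrect {n : ℕ} (i : Fin n) : Form n := .neg (.hope i fbot)

/-- Validity on the class KH. -/
def Valid {n : ℕ} (φ : Form n) : Prop :=
  ∀ (W : Type) (M : Model n W), Nonempty W → M.KH → ∀ w : W, sat φ M w


/-- if `M ∈ KH` and `U` is a hope update model, then the product update
`M × U` is again in KH: each `K_i^×` is an equivalence relation and each `H_i^×` is
shift-serial, contained in `K_i^×`, and satisfies oneH. -/
theorem prodU_KH {n : ℕ} (hn : 0 < n) {W : Type} [Nonempty W] {m : ℕ}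
    (M : Model n W) (hM : M.KH) (U : UpdModel n m) :
    (M.prodU U).KH := by
  obtain ⟨hK, -, -, -⟩ := hM
  refine ⟨fun i => ⟨fun x => ⟨(hK i).refl _, (U.equiv i).refl _⟩,
      fun h => ⟨(hK i).symm h.1, (U.equiv i).symm h.2⟩,
      fun h h' => ⟨(hK i).trans h.1 h'.1, (U.equiv i).trans h.2 h'.2⟩⟩, ?_, ?_, ?_⟩
  · intro i w v h
    exact ⟨v, ⟨(hK i).refl _, (U.equiv i).refl _⟩, h.2.2, h.2.2⟩
  · intro i w v h
    exact h.1
  · rintro i w v ⟨x, hx⟩ ⟨y, hy⟩ h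
    exact ⟨h, hx.2.1, hy.2.1⟩
end

section
/- Private hope updates compose: for every model M in KH and hope update models U = (E,ϑ,K^U) and U' = (E',ϑ',K^{U'}), the map ((w,e),e') ↦ (w,(e,e')) is an isomorphism between the models (M × U) × U' and M × (U ; U'); consequently, for all e ∈ E, e' ∈ E', w ∈ W and φ ∈ L_KH^priv, M,w ⊨ [U,e][U',e']φ if and only if M,w ⊨ [(U;U'),(e,e')]φ. -/
/-- Composition `U ; U'` of hope update models: actions `E × E'` (coded as
`Fin (m * m')` via `finProdFinEquiv`), hope update formulas
`ϑ''_i((e,e')) = [U,e]ϑ'_i(e')`, and the product of the action relations. -/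
def UpdModel.comp {n m m' : ℕ} (U : UpdModel n m) (U' : UpdModel n m') :
    UpdModel n (m * m') where
  ϑ := fun x i =>
    Form.updM U (finProdFinEquiv.symm x).1 (U'.ϑ (finProdFinEquiv.symm x).2 i)
  KU := fun i x y =>
    U.KU i (finProdFinEquiv.symm x).1 (finProdFinEquiv.symm y).1 ∧
    U'.KU i (finProdFinEquiv.symm x).2 (finProdFinEquiv.symm y).2
  equiv := fun i =>
    ⟨fun _ => ⟨(U.equiv i).refl _, (U'.equiv i).refl _⟩,
     fun h => ⟨(U.equiv i).symm h.1, (U'.equiv i).symm h.2⟩,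
     fun h h' => ⟨(U.equiv i).trans h.1 h'.1, (U'.equiv i).trans h.2 h'.2⟩⟩

/-- Truth is invariant under isomorphism of models. -/
theorem sat_iso {n : ℕ} (φ : Form n) : ∀ {W V : Type} (M : Model n W) (N : Model n V)
    (f : W → V), Function.Bijective f → (∀ p x, M.val p x ↔ N.val p (f x)) →
    (∀ i x y, M.K i x y ↔ N.K i (f x) (f y)) →
    (∀ i x y, M.H i x y ↔ N.H i (f x) (f y)) →
    ∀ w, sat φ M w ↔ sat φ N (f w) := by
  induction φ with
  | atom p => intro W V M N f _ hv _ _ w; simpa [sat] using hv p w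
  | neg φ ih =>
    intro W V M N f hf hv hK hH w
    simp only [sat]
    exact not_congr (ih M N f hf hv hK hH w)
  | and φ ψ ih1 ih2 =>
    intro W V M N f hf hv hK hH w
    simp only [sat]
    exact and_congr (ih1 M N f hf hv hK hH w) (ih2 M N f hf hv hK hH w)
  | know i φ ih =>
    intro W V M N f hf hv hK hH w
    simp only [sat]
    rw [hf.surjective.forall]
    exact forall_congr' fun v => imp_congr (hK i w v) (ih M N f hf hv hK hH v)
  | hope i φ ih =>
    intro W V M N f hf hv hK hH w
    simp only [sat]
    rw [hf.surjective.forall]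
    exact forall_congr' fun v => imp_congr (hH i w v) (ih M N f hf hv hK hH v)
  | upd m ϑ KU hKU e ψ ihϑ ih =>
    intro W V M N f hf hv hK hH w
    simp only [sat]
    refine ih _ _ (Prod.map f id) (hf.prodMap Function.bijective_id) ?_ ?_ ?_ (w, e)
    · intro p x
      exact hv p x.1
    · intro i x y
      exact and_congr (hK i x.1 y.1) Iff.rfl
    · intro i x y
      exact and_congr (and_congr (hK i x.1 y.1) Iff.rfl)
        (and_congr (ihϑ x.2 i M N f hf hv hK hH x.1) (ihϑ y.2 i M N f hf hv hK hH y.1))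

/-- private hope updates compose: the map `((w,e),e') ↦ (w,(e,e'))` is an
isomorphism between `(M × U) × U'` and `M × (U ; U')` (a bijection preserving the
valuation and the knowledge and hope relations); consequently
`M,w ⊨ [U,e][U',e']φ` iff `M,w ⊨ [(U;U'),(e,e')]φ`. -/
theorem priv_comp {n : ℕ} (hn : 0 < n) {W : Type} [Nonempty W] {m m' : ℕ}
    (M : Model n W) (hM : M.KH) (U : UpdModel n m) (U' : UpdModel n m') :
    (Function.Bijective
        (fun x : (W × Fin m) × Fin m' => (x.1.1, finProdFinEquiv (x.1.2, x.2))) ∧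
      (∀ (p : ℕ) (x : (W × Fin m) × Fin m'),
        ((M.prodU U).prodU U').val p x ↔
          (M.prodU (U.comp U')).val p (x.1.1, finProdFinEquiv (x.1.2, x.2))) ∧
      (∀ (i : Fin n) (x y : (W × Fin m) × Fin m'),
        ((M.prodU U).prodU U').K i x y ↔
          (M.prodU (U.comp U')).K i (x.1.1, finProdFinEquiv (x.1.2, x.2))
            (y.1.1, finProdFinEquiv (y.1.2, y.2))) ∧
      (∀ (i : Fin n) (x y : (W × Fin m) × Fin m'),
        ((M.prodU U).prodU U').H i x y ↔
          (M.prodU (U.comp U')).H i (x.1.1, finProdFinEquiv (x.1.2, x.2))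
            (y.1.1, finProdFinEquiv (y.1.2, y.2)))) ∧
    ∀ (e : Fin m) (e' : Fin m') (w : W) (φ : Form n),
      sat (Form.updM U e (Form.updM U' e' φ)) M w ↔
        sat (Form.updM (U.comp U') (finProdFinEquiv (e, e')) φ) M w := by
  refine (fun iso => ⟨iso, ?_⟩ : _ → _) ?_
  rotate_left
  · intro e e' w φ
    exact sat_iso φ _ _ _ iso.1 iso.2.1 iso.2.2.1 iso.2.2.2 ((w, e), e')
  · refine ⟨⟨?_, ?_⟩, ?_, ?_, ?_⟩
    · rintro ⟨⟨w, e⟩, e'⟩ ⟨⟨v, f⟩, f'⟩ h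
      have h1 := congrArg Prod.fst h
      have h2 := finProdFinEquiv.injective (congrArg Prod.snd h)
      simp only [Prod.mk.injEq] at h1 h2 ⊢
      exact ⟨⟨h1, h2.1⟩, h2.2⟩
    · rintro ⟨w, x⟩
      exact ⟨((w, (finProdFinEquiv.symm x).1), (finProdFinEquiv.symm x).2),
        Prod.ext rfl (finProdFinEquiv.apply_symm_apply x)⟩
    · intro p x
      exact Iff.rfl
    · intro i x y
      simp only [Model.prodU, Model.prodRaw, UpdModel.comp, Equiv.symm_apply_apply, and_assoc]
    · intro i x y
      simp only [Model.prodU, Model.prodRaw, UpdModel.comp, Equiv.symm_apply_apply, and_assoc,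
        Form.updM, sat]
end

section
/- Soundness and completeness of KH^priv: for every formula φ ∈ L_KH^priv, φ is derivable in the axiom system KH^priv if and only if φ is valid on the class KH. (This may assume, as given, that the base system KH is sound and complete for KH with respect to the update-free language L_KH.) -/
/-- Conjunction of a list of formulas. -/
def bigAnd {n : ℕ} : List (Form n) → Form n
  | [] => ftop
  | φ :: l => .and φ (bigAnd l)

/-- The conjunction `⋀_{f : e K^U_i f} g f` over all actions `f` related to `e`. -/
noncomputable def actConj {n m : ℕ} (KU : Fin n → Fin m → Fin m → Prop)
    (i : Fin n) (e : Fin m) (g : Fin m → Form n) : Form n :=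
  bigAnd (((List.finRange m).filter
    (fun f => @decide (KU i e f) (Classical.dec _))).map g)

/-- `φ` is a propositional tautology: true under every assignment of truth values to
formulas respecting negation and conjunction. -/
def Tautology {n : ℕ} (φ : Form n) : Prop :=
  ∀ v : Form n → Prop,
    (∀ ψ, v (.neg ψ) ↔ ¬ v ψ) → (∀ ψ χ, v (.and ψ χ) ↔ (v ψ ∧ v χ)) → v φ

/-- The axiom system `KH^priv`: the base system `KH` extended with the reduction
axioms for private hope updates. -/
inductive DerivPriv {n : ℕ} : Form n → Prop where
  | taut {φ} : Tautology φ → DerivPriv φ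
  | hdag (i : Fin n) : DerivPriv (.hope i (.neg (.hope i fbot)))
  | kK (i : Fin n) (φ ψ : Form n) :
      DerivPriv (fimpl (.and (.know i (fimpl φ ψ)) (.know i φ)) (.know i ψ))
  | fourK (i : Fin n) (φ : Form n) : DerivPriv (fimpl (.know i φ) (.know i (.know i φ)))
  | fiveK (i : Fin n) (φ : Form n) :
      DerivPriv (fimpl (.neg (.know i φ)) (.know i (.neg (.know i φ))))
  | tK (i : Fin n) (φ : Form n) : DerivPriv (fimpl (.know i φ) φ)
  | kh (i : Fin n) (φ : Form n) :
      DerivPriv (fiff (.hope i φ) (fimpl (fcorrect i) (.know i (fimpl (fcorrect i) φ))))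
  | mp {φ ψ : Form n} : DerivPriv (fimpl φ ψ) → DerivPriv φ → DerivPriv ψ
  | necK {φ : Form n} (i : Fin n) : DerivPriv φ → DerivPriv (.know i φ)
  | redAtom {m : ℕ} (U : UpdModel n m) (e : Fin m) (p : ℕ) :
      DerivPriv (fiff (Form.updM U e (.atom p)) (.atom p))
  | redNeg {m : ℕ} (U : UpdModel n m) (e : Fin m) (φ : Form n) :
      DerivPriv (fiff (Form.updM U e (.neg φ)) (.neg (Form.updM U e φ)))
  | redAnd {m : ℕ} (U : UpdModel n m) (e : Fin m) (φ ψ : Form n) :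
      DerivPriv (fiff (Form.updM U e (.and φ ψ))
        (.and (Form.updM U e φ) (Form.updM U e ψ)))
  | redKnow {m : ℕ} (U : UpdModel n m) (e : Fin m) (i : Fin n) (φ : Form n) :
      DerivPriv (fiff (Form.updM U e (.know i φ))
        (actConj U.KU i e (fun f => .know i (Form.updM U f φ))))
  | redHope {m : ℕ} (U : UpdModel n m) (e : Fin m) (i : Fin n) (φ : Form n) :
      DerivPriv (fiff (Form.updM U e (.hope i φ))
        (fimpl (U.ϑ e i)
          (actConj U.KU i e
            (fun f => .know i (fimpl (U.ϑ f i) (Form.updM U f φ))))))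
  | redComp {m m' : ℕ} (U : UpdModel n m) (U' : UpdModel n m') (e : Fin m)
      (e' : Fin m') (φ : Form n) :
      DerivPriv (fiff (Form.updM U e (Form.updM U' e' φ))
        (Form.updM (U.comp U') (finProdFinEquiv (e, e')) φ))

/-- The base axiom system `KH` (propositional tautologies, `H†`, `K^K`, `4^K`, `5^K`,
`T^K`, the `KH` axiom, modus ponens, and necessitation for `K_i`). -/
inductive DerivKH {n : ℕ} : Form n → Prop where
  | taut {φ} : Tautology φ → DerivKH φ
  | hdag (i : Fin n) : DerivKH (.hope i (.neg (.hope i fbot)))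
  | kK (i : Fin n) (φ ψ : Form n) :
      DerivKH (fimpl (.and (.know i (fimpl φ ψ)) (.know i φ)) (.know i ψ))
  | fourK (i : Fin n) (φ : Form n) : DerivKH (fimpl (.know i φ) (.know i (.know i φ)))
  | fiveK (i : Fin n) (φ : Form n) :
      DerivKH (fimpl (.neg (.know i φ)) (.know i (.neg (.know i φ))))
  | tK (i : Fin n) (φ : Form n) : DerivKH (fimpl (.know i φ) φ)
  | kh (i : Fin n) (φ : Form n) :
      DerivKH (fiff (.hope i φ) (fimpl (fcorrect i) (.know i (fimpl (fcorrect i) φ))))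
  | mp {φ ψ : Form n} : DerivKH (fimpl φ ψ) → DerivKH φ → DerivKH ψ
  | necK {φ : Form n} (i : Fin n) : DerivKH φ → DerivKH (.know i φ)

/-- Update-free formulas: the sublanguage `L_KH` of `L_KH^priv`. -/
inductive UpdFree {n : ℕ} : Form n → Prop where
  | atom (p : ℕ) : UpdFree (.atom p)
  | neg {φ} : UpdFree φ → UpdFree (.neg φ)
  | and {φ ψ} : UpdFree φ → UpdFree ψ → UpdFree (.and φ ψ)
  | know {φ} (i : Fin n) : UpdFree φ → UpdFree (.know i φ)
  | hope {φ} (i : Fin n) : UpdFree φ → UpdFree (.hope i φ)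

namespace KHPriv

variable {n : ℕ}

/-! ### Soundness -/

theorem sat_fimpl {W : Type} (φ ψ : Form n) (M : Model n W) (w : W) :
    sat (fimpl φ ψ) M w ↔ (sat φ M w → sat ψ M w) := by
  simp [fimpl, sat]

theorem sat_fiff {W : Type} (φ ψ : Form n) (M : Model n W) (w : W) :
    sat (fiff φ ψ) M w ↔ (sat φ M w ↔ sat ψ M w) := by
  have h1 := sat_fimpl φ ψ M w
  have h2 := sat_fimpl ψ φ M w
  show (sat (fimpl φ ψ) M w ∧ sat (fimpl ψ φ) M w) ↔ _
  rw [h1, h2]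
  exact iff_iff_implies_and_implies.symm

theorem sat_ftop {W : Type} (M : Model n W) (w : W) : sat ftop M w := by
  simp [ftop, sat]

theorem sat_fbot {W : Type} (M : Model n W) (w : W) : ¬ sat fbot M w := by
  simp [fbot, ftop, sat]

theorem sat_fcorrect {W : Type} (i : Fin n) (M : Model n W) (w : W) :
    sat (fcorrect i) M w ↔ ∃ x, M.H i w x := by
  show (¬ ∀ v, M.H i w v → sat fbot M v) ↔ _
  constructor
  · intro h
    by_contra hc
    exact h (fun v hv => (hc ⟨v, hv⟩).elim)
  · rintro ⟨x, hx⟩ h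
    exact sat_fbot M x (h x hx)

theorem sat_bigAnd {W : Type} (l : List (Form n)) (M : Model n W) (w : W) :
    sat (bigAnd l) M w ↔ ∀ φ ∈ l, sat φ M w := by
  induction l with
  | nil => simp [bigAnd, sat_ftop]
  | cons a l ih => simp [bigAnd, sat, ih]

theorem sat_actConj {W : Type} {m : ℕ} (KU : Fin n → Fin m → Fin m → Prop)
    (i : Fin n) (e : Fin m) (g : Fin m → Form n) (M : Model n W) (w : W) :
    sat (actConj KU i e g) M w ↔ ∀ f, KU i e f → sat (g f) M w := by
  simp [actConj, sat_bigAnd]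

theorem sat_iso (φ : Form n) : ∀ {W W' : Type} (M : Model n W) (M' : Model n W') (σ : W ≃ W'),
    (∀ p w, M.val p w ↔ M'.val p (σ w)) →
    (∀ i w v, M.K i w v ↔ M'.K i (σ w) (σ v)) →
    (∀ i w v, M.H i w v ↔ M'.H i (σ w) (σ v)) →
    ∀ w, sat φ M w ↔ sat φ M' (σ w) := by
  induction φ with
  | atom p => intro W W' M M' σ hv hK hH w; exact hv p w
  | neg φ ih =>
    intro W W' M M' σ hv hK hH w
    exact not_congr (ih M M' σ hv hK hH w)
  | and φ ψ ih1 ih2 =>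
    intro W W' M M' σ hv hK hH w
    exact and_congr (ih1 M M' σ hv hK hH w) (ih2 M M' σ hv hK hH w)
  | know i φ ih =>
    intro W W' M M' σ hv hK hH w
    exact σ.forall_congr (fun v => imp_congr (hK i w v) (ih M M' σ hv hK hH v))
  | hope i φ ih =>
    intro W W' M M' σ hv hK hH w
    exact σ.forall_congr (fun v => imp_congr (hH i w v) (ih M M' σ hv hK hH v))
  | upd m ϑ KU hKU e φ ihϑ ih =>
    intro W W' M M' σ hv hK hH w
    refine ih (M.prodRaw (fun f i v => sat (ϑ f i) M v) KU)
      (M'.prodRaw (fun f i v => sat (ϑ f i) M' v) KU) (σ.prodCongr (Equiv.refl _)) ?_ ?_ ?_ (w, e)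
    · intro p x; exact hv p x.1
    · intro i x y; exact and_congr (hK i x.1 y.1) Iff.rfl
    · intro i x y
      exact and_congr (and_congr (hK i x.1 y.1) Iff.rfl)
        (and_congr (ihϑ x.2 i M M' σ hv hK hH x.1) (ihϑ y.2 i M M' σ hv hK hH y.1))

theorem sat_comp {W : Type} {m m' : ℕ} (U : UpdModel n m) (U' : UpdModel n m') (e : Fin m)
    (e' : Fin m') (φ : Form n) (M : Model n W) (w : W) :
    sat (Form.updM U e (Form.updM U' e' φ)) M w ↔
      sat (Form.updM (U.comp U') (finProdFinEquiv (e, e')) φ) M w := by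
  refine sat_iso φ ((M.prodU U).prodU U') (M.prodU (U.comp U'))
    ((Equiv.prodAssoc _ _ _).trans ((Equiv.refl W).prodCongr finProdFinEquiv)) ?_ ?_ ?_ ((w, e), e')
  · intro p x; exact Iff.rfl
  · rintro i ⟨⟨x, a⟩, a'⟩ ⟨⟨y, b⟩, b'⟩
    show ((M.K i x y ∧ U.KU i a b) ∧ U'.KU i a' b') ↔
      (M.K i x y ∧ (U.KU i (finProdFinEquiv.symm (finProdFinEquiv (a, a'))).1
          (finProdFinEquiv.symm (finProdFinEquiv (b, b'))).1 ∧
        U'.KU i (finProdFinEquiv.symm (finProdFinEquiv (a, a'))).2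
          (finProdFinEquiv.symm (finProdFinEquiv (b, b'))).2))
    simp only [Equiv.symm_apply_apply]
    tauto
  · rintro i ⟨⟨x, a⟩, a'⟩ ⟨⟨y, b⟩, b'⟩
    show (((M.K i x y ∧ U.KU i a b) ∧ U'.KU i a' b') ∧
        sat (Form.updM U a (U'.ϑ a' i)) M x ∧ sat (Form.updM U b (U'.ϑ b' i)) M y) ↔
      ((M.K i x y ∧ (U.KU i (finProdFinEquiv.symm (finProdFinEquiv (a, a'))).1
          (finProdFinEquiv.symm (finProdFinEquiv (b, b'))).1 ∧
        U'.KU i (finProdFinEquiv.symm (finProdFinEquiv (a, a'))).2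
          (finProdFinEquiv.symm (finProdFinEquiv (b, b'))).2)) ∧
        sat (Form.updM U (finProdFinEquiv.symm (finProdFinEquiv (a, a'))).1
          (U'.ϑ (finProdFinEquiv.symm (finProdFinEquiv (a, a'))).2 i)) M x ∧
        sat (Form.updM U (finProdFinEquiv.symm (finProdFinEquiv (b, b'))).1
          (U'.ϑ (finProdFinEquiv.symm (finProdFinEquiv (b, b'))).2 i)) M y)
    simp only [Equiv.symm_apply_apply]
    tauto

theorem soundness {φ : Form n} (h : DerivPriv φ) : Valid φ := by
  induction h with
  | taut h =>
    intro W M _ _ w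
    exact h (fun ψ => sat ψ M w) (fun _ => Iff.rfl) (fun _ _ => Iff.rfl)
  | hdag i =>
    intro W M _ hM w v hv
    exact (sat_fcorrect i M v).2 (hM.2.1 i w v hv)
  | kK i φ ψ =>
    intro W M _ hM w
    rw [sat_fimpl]
    rintro ⟨h1, h2⟩ v hv
    exact (sat_fimpl φ ψ M v).1 (h1 v hv) (h2 v hv)
  | fourK i φ =>
    intro W M _ hM w
    rw [sat_fimpl]
    intro h v hv u hu
    exact h u ((hM.1 i).trans hv hu)
  | fiveK i φ =>
    intro W M _ hM w
    rw [sat_fimpl]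
    intro h v hv h'
    exact h (fun u hu => h' u ((hM.1 i).trans ((hM.1 i).symm hv) hu))
  | tK i φ =>
    intro W M _ hM w
    rw [sat_fimpl]
    intro h
    exact h w ((hM.1 i).refl w)
  | kh i φ =>
    intro W M _ hM w
    rw [sat_fiff, sat_fimpl, sat_fcorrect]
    constructor
    · intro h hw v hv
      rw [sat_fimpl, sat_fcorrect]
      intro hx
      exact h v (hM.2.2.2 i w v hw hx hv)
    · intro h v hv
      exact (sat_fimpl _ _ M v).1 (h ⟨v, hv⟩ v (hM.2.2.1 i w v hv))
        ((sat_fcorrect i M v).2 (hM.2.1 i w v hv))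
  | mp _ _ ih1 ih2 =>
    intro W M hW hM w
    exact (sat_fimpl _ _ M w).1 (ih1 W M hW hM w) (ih2 W M hW hM w)
  | necK i _ ih =>
    intro W M hW hM w v _
    exact ih W M hW hM v
  | redAtom U e p =>
    intro W M _ hM w
    rw [sat_fiff]
    exact Iff.rfl
  | redNeg U e φ =>
    intro W M _ hM w
    rw [sat_fiff]
    exact Iff.rfl
  | redAnd U e φ ψ =>
    intro W M _ hM w
    rw [sat_fiff]
    exact Iff.rfl
  | redKnow U e i φ =>
    intro W M _ hM w
    rw [sat_fiff, sat_actConj]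
    constructor
    · intro h f hf v hv
      exact h (v, f) ⟨hv, hf⟩
    · rintro h ⟨v, f⟩ ⟨hv, hf⟩
      exact h f hf v hv
  | redHope U e i φ =>
    intro W M _ hM w
    rw [sat_fiff, sat_fimpl, sat_actConj]
    constructor
    · intro h he f hf v hv
      rw [sat_fimpl]
      intro hf'
      exact h (v, f) ⟨⟨hv, hf⟩, he, hf'⟩
    · rintro h ⟨v, f⟩ ⟨⟨hv, hf⟩, he, hf'⟩
      exact (sat_fimpl _ _ M v).1 (h he f hf v hv) hf'
  | redComp U U' e e' φ =>
    intro W M _ hM w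
    rw [sat_fiff]
    exact sat_comp U U' e e' φ M w

/-! ### Reduction to update-free formulas -/

theorem deriv_of_base {φ : Form n} (h : DerivKH φ) : DerivPriv φ := by
  induction h with
  | taut h => exact .taut h
  | hdag i => exact .hdag i
  | kK i φ ψ => exact .kK i φ ψ
  | fourK i φ => exact .fourK i φ
  | fiveK i φ => exact .fiveK i φ
  | tK i φ => exact .tK i φ
  | kh i φ => exact .kh i φ
  | mp _ _ ih1 ih2 => exact .mp ih1 ih2
  | necK i _ ih => exact .necK i ih

theorem mp2 {φ ψ χ : Form n} (h : Tautology (fimpl φ (fimpl ψ χ)))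
    (h1 : DerivPriv φ) (h2 : DerivPriv ψ) : DerivPriv χ :=
  .mp (.mp (.taut h) h1) h2

theorem iff_refl (φ : Form n) : DerivPriv (fiff φ φ) := by
  refine .taut ?_
  intro v hn ha
  simp only [fimpl, fiff, hn, ha]; tauto

theorem iff_trans {φ ψ χ : Form n} (h1 : DerivPriv (fiff φ ψ)) (h2 : DerivPriv (fiff ψ χ)) :
    DerivPriv (fiff φ χ) := by
  refine mp2 ?_ h1 h2
  intro v hn ha
  simp only [fimpl, fiff, hn, ha]; tauto

theorem iff_left {φ ψ : Form n} (h : DerivPriv (fiff φ ψ)) : DerivPriv (fimpl φ ψ) := by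
  refine .mp (.taut ?_) h
  intro v hn ha
  simp only [fimpl, fiff, hn, ha]; tauto

theorem iff_right {φ ψ : Form n} (h : DerivPriv (fiff φ ψ)) : DerivPriv (fimpl ψ φ) := by
  refine .mp (.taut ?_) h
  intro v hn ha
  simp only [fimpl, fiff, hn, ha]; tauto

theorem iff_intro {φ ψ : Form n} (h1 : DerivPriv (fimpl φ ψ)) (h2 : DerivPriv (fimpl ψ φ)) :
    DerivPriv (fiff φ ψ) := by
  refine mp2 ?_ h1 h2
  intro v hn ha
  simp only [fimpl, fiff, hn, ha]; tauto

theorem iff_neg {φ ψ : Form n} (h : DerivPriv (fiff φ ψ)) :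
    DerivPriv (fiff (.neg φ) (.neg ψ)) := by
  refine .mp (.taut ?_) h
  intro v hn ha
  simp only [fimpl, fiff, hn, ha]; tauto

theorem iff_and {φ ψ φ' ψ' : Form n} (h : DerivPriv (fiff φ φ')) (h' : DerivPriv (fiff ψ ψ')) :
    DerivPriv (fiff (.and φ ψ) (.and φ' ψ')) := by
  refine mp2 ?_ h h'
  intro v hn ha
  simp only [fimpl, fiff, hn, ha]; tauto

theorem know_mono (i : Fin n) {φ ψ : Form n} (h : DerivPriv (fimpl φ ψ)) :
    DerivPriv (fimpl (.know i φ) (.know i ψ)) := by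
  refine mp2 ?_ (DerivPriv.kK i φ ψ) (DerivPriv.necK i h)
  intro v hn ha
  generalize hχ : fimpl φ ψ = χ
  simp only [fimpl, hn, ha]; tauto

theorem iff_know (i : Fin n) {φ ψ : Form n} (h : DerivPriv (fiff φ ψ)) :
    DerivPriv (fiff (.know i φ) (.know i ψ)) :=
  iff_intro (know_mono i (iff_left h)) (know_mono i (iff_right h))

/-- `φ` is provably equivalent to an update-free formula. -/
def Red (φ : Form n) : Prop := ∃ ψ, UpdFree ψ ∧ DerivPriv (fiff φ ψ)

theorem Red.of_iff {φ ψ : Form n} (h : DerivPriv (fiff φ ψ)) (hψ : Red ψ) : Red φ := by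
  obtain ⟨χ, h1, h2⟩ := hψ
  exact ⟨χ, h1, iff_trans h h2⟩

theorem Red.of_free {φ : Form n} (h : UpdFree φ) : Red φ := ⟨φ, h, iff_refl φ⟩

theorem Red.neg {φ : Form n} (h : Red φ) : Red (.neg φ) := by
  obtain ⟨χ, h1, h2⟩ := h
  exact ⟨_, .neg h1, iff_neg h2⟩

theorem Red.and {φ ψ : Form n} (h : Red φ) (h' : Red ψ) : Red (.and φ ψ) := by
  obtain ⟨χ, h1, h2⟩ := h
  obtain ⟨χ', h1', h2'⟩ := h'
  exact ⟨_, .and h1 h1', iff_and h2 h2'⟩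

theorem Red.know (i : Fin n) {φ : Form n} (h : Red φ) : Red (.know i φ) := by
  obtain ⟨χ, h1, h2⟩ := h
  exact ⟨_, .know i h1, iff_know i h2⟩

theorem Red.impl {φ ψ : Form n} (h : Red φ) (h' : Red ψ) : Red (fimpl φ ψ) :=
  (h.and h'.neg).neg

theorem free_top : UpdFree (ftop : Form n) := .neg (.and (.atom 0) (.neg (.atom 0)))

theorem red_correct (i : Fin n) : Red (fcorrect i) :=
  Red.of_free (.neg (.hope i (.neg free_top)))

theorem Red.hope (i : Fin n) {φ : Form n} (h : Red φ) : Red (.hope i φ) :=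
  Red.of_iff (.kh i φ) ((red_correct i).impl (((red_correct i).impl h).know i))

theorem red_bigAnd (l : List (Form n)) (h : ∀ φ ∈ l, Red φ) : Red (bigAnd l) := by
  induction l with
  | nil => exact Red.of_free free_top
  | cons a l ih =>
    exact (h a (by simp)).and (ih (fun φ hφ => h φ (by simp [hφ])))

theorem red_actConj {m : ℕ} (KU : Fin n → Fin m → Fin m → Prop)
    (i : Fin n) (e : Fin m) (g : Fin m → Form n) (h : ∀ f, Red (g f)) :
    Red (actConj KU i e g) := by
  refine red_bigAnd _ ?_
  intro φ hφ
  obtain ⟨f, _, rfl⟩ := List.mem_map.1 hφ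
  exact h f

theorem red_main (φ : Form n) : Red φ ∧ ∀ (m : ℕ) (U : UpdModel n m),
    (∀ e i, Red (U.ϑ e i)) → ∀ e, Red (Form.updM U e φ) := by
  induction φ with
  | atom p =>
    exact ⟨Red.of_free (.atom p), fun m U hU e =>
      Red.of_iff (.redAtom U e p) (Red.of_free (.atom p))⟩
  | neg φ ih =>
    exact ⟨ih.1.neg, fun m U hU e => Red.of_iff (.redNeg U e φ) (ih.2 m U hU e).neg⟩
  | and φ ψ ih1 ih2 =>
    exact ⟨ih1.1.and ih2.1, fun m U hU e =>
      Red.of_iff (.redAnd U e φ ψ) ((ih1.2 m U hU e).and (ih2.2 m U hU e))⟩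
  | know i φ ih =>
    exact ⟨ih.1.know i, fun m U hU e =>
      Red.of_iff (.redKnow U e i φ) (red_actConj _ _ _ _ fun f => (ih.2 m U hU f).know i)⟩
  | hope i φ ih =>
    exact ⟨ih.1.hope i, fun m U hU e =>
      Red.of_iff (.redHope U e i φ) ((hU e i).impl
        (red_actConj _ _ _ _ fun f => ((hU f i).impl (ih.2 m U hU f)).know i))⟩
  | upd m' ϑ KU hKU e' φ ihϑ ih =>
    refine ⟨ih.2 m' ⟨ϑ, KU, hKU⟩ (fun f i => (ihϑ f i).1) e', fun m U hU e => ?_⟩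
    exact Red.of_iff (.redComp U ⟨ϑ, KU, hKU⟩ e e' φ)
      (ih.2 _ _ (fun f i => (ihϑ _ i).2 m U hU _) _)

end KHPriv

/-- soundness and completeness of `KH^priv`: a formula of `L_KH^priv` is
derivable in `KH^priv` iff it is valid on the class KH. The hypothesis `hbase` is the
given soundness and completeness of the base system `KH` for the update-free
language `L_KH`. -/
theorem khpriv_sound_complete {n : ℕ} (hn : 0 < n)
    (hbase : ∀ φ : Form n, UpdFree φ → (DerivKH φ ↔ Valid φ)) :
    ∀ φ : Form n, DerivPriv φ ↔ Valid φ := by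
  intro φ
  refine ⟨KHPriv.soundness, fun hφ => ?_⟩
  obtain ⟨ψ, hfree, hiff⟩ := (KHPriv.red_main φ).1
  have hψ : Valid ψ := fun W M hW hM w =>
    (KHPriv.sat_fiff φ ψ M w).1 (KHPriv.soundness hiff W M hW hM w) |>.1 (hφ W M hW hM w)
  exact .mp (KHPriv.iff_right hiff) (KHPriv.deriv_of_base ((hbase ψ hfree).2 hψ))
end

section
/- Equiexpressivity of L_KH^priv with L_KH: there is a translation t : L_KH^priv → L_KH (defined by recursion along a complexity measure, pushing private update modalities inward via the reduction axioms of KH^priv) such that for every formula φ ∈ L_KH^priv, t(φ) contains no update modality and the equivalence φ ↔ t(φ) is derivable in the axiom system KH^priv. -/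
/-- Derivably equivalent to an update-free formula. -/
def PrivRed {n : ℕ} (φ : Form n) : Prop :=
  ∃ ψ : Form n, UpdFree ψ ∧ DerivPriv (fiff φ ψ)

theorem dmp2 {n : ℕ} {a b c : Form n} (h : Tautology (fimpl a (fimpl b c)))
    (ha : DerivPriv a) (hb : DerivPriv b) : DerivPriv c :=
  .mp (.mp (.taut h) ha) hb

theorem dmp1 {n : ℕ} {a c : Form n} (h : Tautology (fimpl a c))
    (ha : DerivPriv a) : DerivPriv c :=
  .mp (.taut h) ha

theorem iff_trans' {n : ℕ} {a b c : Form n} (h1 : DerivPriv (fiff a b))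
    (h2 : DerivPriv (fiff b c)) : DerivPriv (fiff a c) := by
  refine dmp2 ?_ h1 h2
  intro v hn ha
  simp only [fiff, fimpl, hn, ha]
  tauto

theorem iff_symm' {n : ℕ} {a b : Form n} (h1 : DerivPriv (fiff a b)) :
    DerivPriv (fiff b a) := by
  refine dmp1 ?_ h1
  intro v hn ha
  simp only [fiff, fimpl, hn, ha]
  tauto

theorem iff_refl' {n : ℕ} (a : Form n) : DerivPriv (fiff a a) := by
  refine .taut ?_
  intro v hn ha
  simp only [fiff, fimpl, hn, ha]
  tauto

theorem iff_neg' {n : ℕ} {a b : Form n} (h1 : DerivPriv (fiff a b)) :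
    DerivPriv (fiff (.neg a) (.neg b)) := by
  refine dmp1 ?_ h1
  intro v hn ha
  simp only [fiff, fimpl, hn, ha]
  tauto

theorem iff_and' {n : ℕ} {a b c d : Form n} (h1 : DerivPriv (fiff a b))
    (h2 : DerivPriv (fiff c d)) : DerivPriv (fiff (.and a c) (.and b d)) := by
  refine dmp2 ?_ h1 h2
  intro v hn ha
  simp only [fiff, fimpl, hn, ha]
  tauto

theorem iff_impl' {n : ℕ} {a b c d : Form n} (h1 : DerivPriv (fiff a b))
    (h2 : DerivPriv (fiff c d)) : DerivPriv (fiff (fimpl a c) (fimpl b d)) :=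
  iff_neg' (iff_and' h1 (iff_neg' h2))

theorem know_mono' {n : ℕ} (i : Fin n) {a b : Form n} (h : DerivPriv (fimpl a b)) :
    DerivPriv (fimpl (.know i a) (.know i b)) := by
  refine dmp2 ?_ (DerivPriv.kK i a b) (DerivPriv.necK i h)
  intro v hn ha
  simp only [fimpl, hn, ha]
  tauto

theorem iff_know' {n : ℕ} (i : Fin n) {a b : Form n} (h : DerivPriv (fiff a b)) :
    DerivPriv (fiff (.know i a) (.know i b)) := by
  have h1 : DerivPriv (fimpl a b) := by
    refine dmp1 ?_ h
    intro v hn ha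
    simp only [fiff, fimpl, hn, ha]
    tauto
  have h2 : DerivPriv (fimpl b a) := by
    refine dmp1 ?_ h
    intro v hn ha
    simp only [fiff, fimpl, hn, ha]
    tauto
  refine dmp2 ?_ (know_mono' i h1) (know_mono' i h2)
  intro v hn ha
  simp only [fiff, fimpl, hn, ha]
  tauto

theorem iff_hope' {n : ℕ} (i : Fin n) {a b : Form n} (h : DerivPriv (fiff a b)) :
    DerivPriv (fiff (.hope i a) (.hope i b)) :=
  iff_trans' (.kh i a) (iff_trans'
    (iff_impl' (iff_refl' _) (iff_know' i (iff_impl' (iff_refl' _) h)))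
    (iff_symm' (.kh i b)))

namespace PrivRed

variable {n : ℕ}

theorem of_iff {a b : Form n} (h : DerivPriv (fiff a b)) : PrivRed b → PrivRed a :=
  fun ⟨c, hc, hd⟩ => ⟨c, hc, iff_trans' h hd⟩

theorem atom (p : ℕ) : PrivRed (.atom p : Form n) := ⟨_, .atom p, iff_refl' _⟩

theorem neg {a : Form n} : PrivRed a → PrivRed (.neg a) :=
  fun ⟨_, hc, hd⟩ => ⟨_, .neg hc, iff_neg' hd⟩

theorem and {a b : Form n} : PrivRed a → PrivRed b → PrivRed (.and a b) :=
  fun ⟨_, hc, hd⟩ ⟨_, hc', hd'⟩ => ⟨_, .and hc hc', iff_and' hd hd'⟩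

theorem know {a : Form n} (i : Fin n) : PrivRed a → PrivRed (.know i a) :=
  fun ⟨_, hc, hd⟩ => ⟨_, .know i hc, iff_know' i hd⟩

theorem hope {a : Form n} (i : Fin n) : PrivRed a → PrivRed (.hope i a) :=
  fun ⟨_, hc, hd⟩ => ⟨_, .hope i hc, iff_hope' i hd⟩

theorem impl {a b : Form n} (h : PrivRed a) (h' : PrivRed b) : PrivRed (fimpl a b) :=
  (h.and h'.neg).neg

theorem big (l : List (Form n)) (h : ∀ a ∈ l, PrivRed a) : PrivRed (bigAnd l) := by
  induction l with
  | nil => exact ((atom 0).and (atom 0).neg).neg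
  | cons a l ih =>
    exact (h a (by simp)).and (ih fun b hb => h b (by simp [hb]))

theorem conj {m : ℕ} (KU : Fin n → Fin m → Fin m → Prop) (i : Fin n) (e : Fin m)
    (g : Fin m → Form n) (h : ∀ f, PrivRed (g f)) : PrivRed (actConj KU i e g) := by
  refine big _ fun a ha => ?_
  obtain ⟨f, _, rfl⟩ := List.mem_map.1 ha
  exact h f

/-- Every formula is reducible, and so is its update by any update model with
reducible hope update formulas. -/
theorem main (φ : Form n) : PrivRed φ ∧ ∀ (m : ℕ) (U : UpdModel n m),
    (∀ f i, PrivRed (U.ϑ f i)) → ∀ e, PrivRed (Form.updM U e φ) := by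
  induction φ with
  | atom p => exact ⟨atom p, fun m U _ e => of_iff (.redAtom U e p) (atom p)⟩
  | neg φ ih =>
    exact ⟨ih.1.neg, fun m U hU e => of_iff (.redNeg U e φ) (ih.2 m U hU e).neg⟩
  | and φ ψ ih ih' =>
    exact ⟨ih.1.and ih'.1, fun m U hU e =>
      of_iff (.redAnd U e φ ψ) ((ih.2 m U hU e).and (ih'.2 m U hU e))⟩
  | know i φ ih =>
    exact ⟨ih.1.know i, fun m U hU e => of_iff (.redKnow U e i φ)
      (conj _ _ _ _ fun f => (ih.2 m U hU f).know i)⟩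
  | hope i φ ih =>
    exact ⟨ih.1.hope i, fun m U hU e => of_iff (.redHope U e i φ)
      ((hU e i).impl (conj _ _ _ _ fun f => ((hU f i).impl (ih.2 m U hU f)).know i))⟩
  | upd m' ϑ KU hKU e' φ ihϑ ih =>
    refine ⟨ih.2 m' ⟨ϑ, KU, hKU⟩ (fun f i => (ihϑ f i).1) e', fun m U hU e => ?_⟩
    exact of_iff (.redComp U ⟨ϑ, KU, hKU⟩ e e' φ)
      (ih.2 _ _ (fun x i => (ihϑ _ i).2 m U hU _) _)

end PrivRed

/-- equiexpressivity of `L_KH^priv` with `L_KH`: there is a translation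
`t : L_KH^priv → L_KH` such that for every formula `φ`, `t(φ)` contains no update
modality and `φ ↔ t(φ)` is derivable in `KH^priv`. -/
theorem priv_equiexpressivity {n : ℕ} (hn : 0 < n) :
    ∃ t : Form n → Form n, ∀ φ : Form n, UpdFree (t φ) ∧ DerivPriv (fiff φ (t φ)) := by
  choose t ht using fun φ : Form n => (PrivRed.main φ).1
  exact ⟨t, ht⟩
end
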